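/- Let G be a finite simple graph, let x be a vertex of G, and let ℓ⁻, ℓ⁺ ≥ 0 be integers with ℓ := ℓ⁻ + ℓ⁺ ≥ 1. Then the sum of Q(σ) over all directed simple paths σ = (v_0, …, v_ℓ) in G of length ℓ such that v_{ℓ⁻} = x, deg(v_{i-1}) > deg(v_i) for all 1 ≤ i ≤ ℓ⁻, and deg(v_i) ≤ deg(v_{i+1}) for all ℓ⁻ ≤ i ≤ ℓ−1, is at most 1. -/

import Mathlib

/-!
Cutting a path of the sum at `x` gives a walk `q` of length `ℓ⁻`, traversed backwards by the path,
and a walk `r` of length `ℓ⁺`, both started at `x`. Degrees weakly increase along `q` and along `r`,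
so each minimum in `Q` is attained at the endpoint of the edge that comes first in `q` or `r`. Hence
`Q` is the probability that two independent simple random walks started at `x` follow `q` and `r`.
Distinct paths give disjoint events, so these probabilities sum to at most `1`.
-/

open Real

noncomputable section

namespace RumourSpreading

/-- The degree of a vertex, defined without decidability assumptions. -/
def deg {V : Type*} (G : SimpleGraph V) (u : V) : ℕ := (G.neighborSet u).ncard

/-- `Q(σ) = Π_{i=1}^{|σ|} 1 / min(deg(σ_{i-1}), deg(σ_i))` for a walk `σ`. -/
def Q {V : Type*} (G : SimpleGraph V) {u v : V} (p : G.Walk u v) : ℝ :=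
  ∏ i ∈ Finset.range p.length,
    ((min (deg G (p.getVert i)) (deg G (p.getVert (i + 1))) : ℝ))⁻¹

open SimpleGraph

section FinsetSums

lemma sum_le_sum_of_forall_exists_preimage {ι κ M : Type*} [AddCommMonoid M]
    [PartialOrder M] [IsOrderedAddMonoid M] {s : Finset ι} {t : Finset κ} {f : ι → M} {g : κ → M}
    (e : κ → ι) (hg : ∀ j ∈ t, 0 ≤ g j) (h : ∀ i ∈ s, ∃ j ∈ t, e j = i ∧ f i ≤ g j) :
    ∑ i ∈ s, f i ≤ ∑ j ∈ t, g j := by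
  classical
  have fiber_nonneg (i : ι) : ∀ j ∈ t.filter (e · = i), 0 ≤ g j :=
    fun j hj => hg j (Finset.mem_of_mem_filter j hj)
  calc ∑ i ∈ s, f i ≤ ∑ i ∈ s, ∑ j ∈ t with e j = i, g j := by
        refine Finset.sum_le_sum fun i hi => ?_
        obtain ⟨j, hj, hji, hfg⟩ := h i hi
        exact hfg.trans
          (Finset.single_le_sum (fiber_nonneg i) (Finset.mem_filter.mpr ⟨hj, hji⟩))
    _ ≤ ∑ j ∈ t, g j :=
        Finset.sum_fiberwise_le_sum_of_sum_fiber_nonneg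
          fun i _ => Finset.sum_nonneg (fiber_nonneg i)

lemma sum_finsetWalkLength_succ {V M : Type*} [DecidableEq V] [AddCommMonoid M]
    (G : SimpleGraph V) [G.LocallyFinite] (n : ℕ) (u v : V) (f : G.Walk u v → M) :
    ∑ p ∈ G.finsetWalkLength (n + 1) u v, f p =
      ∑ w : G.neighborSet u, ∑ p ∈ G.finsetWalkLength n w v,
        f (.cons ((G.mem_neighborSet u w).mp w.2) p) := by
  rw [finsetWalkLength, Finset.sum_biUnion]
  · exact Finset.sum_congr rfl fun w _ => Finset.sum_map _ _ _
  · intro a _ b _ hab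
    refine Finset.disjoint_left.mpr fun p ha hb => ?_
    obtain ⟨q, -, rfl⟩ := Finset.mem_map.mp ha
    obtain ⟨r, -, hr⟩ := Finset.mem_map.mp hb
    exact hab (Subtype.ext (Walk.cons.inj hr).1.symm)

end FinsetSums

section Walks

variable {V : Type*} (G : SimpleGraph V) {u v w : V}

/-- The probability that a simple random walk on `G` started at `u` follows `p` in its first
`p.length` steps. -/
def walkProb (p : G.Walk u v) : ℝ :=
  ∏ i ∈ Finset.range p.length, (deg G (p.getVert i) : ℝ)⁻¹

lemma walkProb_nonneg (p : G.Walk u v) : 0 ≤ walkProb G p :=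
  Finset.prod_nonneg fun _ _ => by positivity

lemma walkProb_cons (h : G.Adj u w) (p : G.Walk w v) :
    walkProb G (.cons h p) = (deg G u : ℝ)⁻¹ * walkProb G p := by
  simp only [walkProb, Walk.length_cons, Finset.prod_range_succ', Walk.getVert_cons_succ,
    Walk.getVert_zero, mul_comm]

lemma deg_eq_degree [Fintype (G.neighborSet u)] : deg G u = G.degree u := by
  rw [deg, Set.ncard_eq_toFinset_card', degree, neighborFinset]

lemma sum_walkProb_le_one [DecidableEq V] [G.LocallyFinite] (n : ℕ) (u : V) (t : Finset V) :
    ∑ v ∈ t, ∑ p ∈ G.finsetWalkLength n u v, walkProb G p ≤ 1 := by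
  induction n generalizing u with
  | zero =>
    have only_nil (v : V) : ∑ p ∈ G.finsetWalkLength 0 u v, walkProb G p =
        if u = v then 1 else 0 := by
      split_ifs with huv
      · subst huv
        simp [finsetWalkLength, walkProb]
      · simp [finsetWalkLength, huv]
    simp only [only_nil, Finset.sum_ite_eq]
    split_ifs <;> norm_num
  | succ n ih =>
    calc ∑ v ∈ t, ∑ p ∈ G.finsetWalkLength (n + 1) u v, walkProb G p
        = ∑ w : G.neighborSet u, (deg G u : ℝ)⁻¹ *
            ∑ v ∈ t, ∑ p ∈ G.finsetWalkLength n w v, walkProb G p := by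
          simp only [sum_finsetWalkLength_succ, walkProb_cons, Finset.mul_sum]
          exact Finset.sum_comm
      _ ≤ ∑ _w : G.neighborSet u, (deg G u : ℝ)⁻¹ * 1 := by
          gcongr with w
          exact ih w
      _ = G.degree u * (G.degree u : ℝ)⁻¹ := by
          rw [Finset.sum_const, Finset.card_univ, card_neighborSet_eq_degree, nsmul_eq_mul,
            mul_one, deg_eq_degree]
      _ ≤ 1 := mul_inv_le_one

lemma Q_nonneg (p : G.Walk u v) : 0 ≤ Q G p :=
  Finset.prod_nonneg fun _ _ => by positivity

lemma Q_nil : Q G (.nil : G.Walk u u) = 1 :=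
  Finset.prod_range_zero _

lemma Q_cons (h : G.Adj u w) (p : G.Walk w v) :
    Q G (.cons h p) = (min (deg G u) (deg G w) : ℝ)⁻¹ * Q G p := by
  simp only [Q, Walk.length_cons, Finset.prod_range_succ', Walk.getVert_cons_succ,
    Walk.getVert_zero, mul_comm]

lemma Q_append (p : G.Walk u v) (q : G.Walk v w) : Q G (p.append q) = Q G p * Q G q := by
  induction p with
  | nil => rw [Walk.nil_append, Q_nil, one_mul]
  | cons h p ih => rw [Walk.cons_append, Q_cons, Q_cons, ih, mul_assoc]

lemma Q_reverse (p : G.Walk u v) : Q G p.reverse = Q G p := by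
  induction p with
  | nil => rfl
  | cons h p ih =>
    rw [Walk.reverse_cons, Q_append, ih, Q_cons, Q_cons, Q_nil, mul_one, min_comm, mul_comm]

lemma Q_eq_walkProb {p : G.Walk u v}
    (hp : ∀ i < p.length, deg G (p.getVert i) ≤ deg G (p.getVert (i + 1))) :
    Q G p = walkProb G p :=
  Finset.prod_congr rfl fun i hi => by
    rw [min_eq_left (Nat.cast_le.mpr (hp i (Finset.mem_range.mp hi)))]

lemma Q_eq_walkProb_reverse_take_mul_walkProb_drop {p : G.Walk u v} {k : ℕ}
    (hdec : ∀ i < k, deg G (p.getVert (i + 1)) ≤ deg G (p.getVert i))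
    (hinc : ∀ i, k ≤ i → i < p.length → deg G (p.getVert i) ≤ deg G (p.getVert (i + 1))) :
    Q G p = walkProb G (p.take k).reverse * walkProb G (p.drop k) := by
  have take_inc : ∀ i < (p.take k).reverse.length,
      deg G ((p.take k).reverse.getVert i) ≤ deg G ((p.take k).reverse.getVert (i + 1)) := by
    intro i hi
    rw [Walk.length_reverse, Walk.take_length] at hi
    simp only [Walk.getVert_reverse, Walk.take_getVert, Walk.take_length]
    convert hdec (k ⊓ p.length - (i + 1)) (by omega) using 3 <;> omega
  have drop_inc : ∀ i < (p.drop k).length,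
      deg G ((p.drop k).getVert i) ≤ deg G ((p.drop k).getVert (i + 1)) := by
    intro i hi
    rw [Walk.drop_length] at hi
    simp only [Walk.drop_getVert]
    exact hinc (k + i) (by omega) (by omega)
  rw [← Q_eq_walkProb G take_inc, ← Q_eq_walkProb G drop_inc, Q_reverse, ← Q_append,
    Walk.append_take_drop_eq]

end Walks

section Segments

variable {V : Type*} [DecidableEq V] (G : SimpleGraph V) [G.LocallyFinite]

lemma sum_Q_segments_le_sum_walkProb_mul_sum_walkProb (x u v : V) (lm lp : ℕ) :
    ∑ p ∈ (G.finsetWalkLength (lm + lp) u v).filter (fun p =>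
        p.getVert lm = x ∧
        (∀ i ∈ Finset.Icc 1 lm, deg G (p.getVert i) ≤ deg G (p.getVert (i - 1))) ∧
        (∀ i ∈ Finset.Ico lm (lm + lp), deg G (p.getVert i) ≤ deg G (p.getVert (i + 1)))),
      Q G p
    ≤ (∑ q ∈ G.finsetWalkLength lm x u, walkProb G q) *
        ∑ r ∈ G.finsetWalkLength lp x v, walkProb G r := by
  rw [Finset.sum_mul_sum, ← Finset.sum_product']
  refine sum_le_sum_of_forall_exists_preimage (fun qr => qr.1.reverse.append qr.2)
    (fun qr _ => mul_nonneg (walkProb_nonneg G qr.1) (walkProb_nonneg G qr.2)) fun p hp => ?_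
  obtain ⟨hlen, rfl, hdec, hinc⟩ := Finset.mem_filter.mp hp
  rw [mem_finsetWalkLength_iff] at hlen
  refine ⟨((p.take lm).reverse, p.drop lm), ?_, ?_, ?_⟩
  · simp only [Finset.mem_product, mem_finsetWalkLength_iff, Walk.length_reverse, Walk.take_length,
      Walk.drop_length]
    omega
  · rw [Walk.reverse_reverse, Walk.append_take_drop_eq]
  · refine (Q_eq_walkProb_reverse_take_mul_walkProb_drop G (fun i hi => ?_) fun i hi hi' => ?_).le
    · exact hdec (i + 1) (Finset.mem_Icc.mpr ⟨by omega, hi⟩)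
    · exact hinc i (Finset.mem_Ico.mpr ⟨hi, hlen ▸ hi'⟩)

/-- `V` may be infinite, so the bound is put on the partial sums over finite sets of endpoints. -/
theorem sum_Q_segments_le_one_general (x : V) (lm lp : ℕ) (s t : Finset V) :
    ∑ u ∈ s, ∑ v ∈ t,
        ∑ p ∈ (G.finsetWalkLength (lm + lp) u v).filter (fun p =>
            p.getVert lm = x ∧
            (∀ i ∈ Finset.Icc 1 lm, deg G (p.getVert i) ≤ deg G (p.getVert (i - 1))) ∧
            (∀ i ∈ Finset.Ico lm (lm + lp), deg G (p.getVert i) ≤ deg G (p.getVert (i + 1)))),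
          Q G p
      ≤ 1 := by
  refine (Finset.sum_le_sum fun u _ => Finset.sum_le_sum fun v _ =>
    sum_Q_segments_le_sum_walkProb_mul_sum_walkProb G x u v lm lp).trans ?_
  rw [← Finset.sum_mul_sum]
  exact mul_le_one₀ (sum_walkProb_le_one G lm x s)
    (Finset.sum_nonneg fun v _ => Finset.sum_nonneg fun r _ => walkProb_nonneg G r)
    (sum_walkProb_le_one G lp x t)

end Segments

/-- The sum of `Q` over all directed simple paths of length `ℓ = ℓ⁻ + ℓ⁺` whose `ℓ⁻`-th
vertex is `x`, whose degrees strictly decrease up to position `ℓ⁻` and weakly increase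
afterwards, is at most `1`. -/
theorem sum_Q_segments_le_one {V : Type*} [Fintype V] [DecidableEq V]
    (G : SimpleGraph V) [DecidableRel G.Adj] (x : V) (lm lp : ℕ) (h : 1 ≤ lm + lp) :
    ∑ u : V, ∑ v : V,
        ∑ p ∈ (G.finsetWalkLength (lm + lp) u v).filter (fun p =>
            p.IsPath ∧ p.getVert lm = x ∧
            (∀ i ∈ Finset.Icc 1 lm, deg G (p.getVert i) < deg G (p.getVert (i - 1))) ∧
            (∀ i ∈ Finset.Ico lm (lm + lp), deg G (p.getVert i) ≤ deg G (p.getVert (i + 1)))),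
          Q G p
      ≤ 1 := by
  refine le_trans ?_ (sum_Q_segments_le_one_general G x lm lp .univ .univ)
  refine Finset.sum_le_sum fun u _ => Finset.sum_le_sum fun v _ =>
    Finset.sum_le_sum_of_subset_of_nonneg (Finset.monotone_filter_right _ ?_)
      fun p _ _ => Q_nonneg G p
  exact fun p _ ⟨_, hx, hdec, hinc⟩ => ⟨hx, fun i hi => (hdec i hi).le, hinc⟩

end RumourSpreading
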